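/- Let w be an ideal weight on ℕ and set B_w := (1/2) • (|w| • I + A_w). Then spec(B_w) = [0, |w|] (as a subset of ℂ), and moreover spec(B_w) equals the closure of {μ_w(σ) : σ ∈ Γ}, the set of values of μ_w over finite subsets of ℕ. -/

import Mathlib

noncomputable section

/-- The Hilbert space `𝔥 = ℓ²(Γ)` with `Γ = Finset ℕ`. -/
abbrev H : Type := lp (fun _ : Finset ℕ => ℂ) 2

/-- The canonical orthonormal basis vector `Z_σ`. -/
noncomputable def Z (σ : Finset ℕ) : H := lp.single 2 σ (1 : ℂ)

theorem Xi_apply (k : ℕ) (X : H →L[ℂ] H) (hX : ∀ σ, X (Z σ) = Z (symmDiff σ {k})) (x : H)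
    (σ : Finset ℕ) : (X x : H) σ = x (symmDiff σ {k}) := by
  have h1 : HasSum (fun i => lp.single 2 i (x i)) x := lp.hasSum_single (by norm_num) x
  have h2 := h1.mapL X
  have h3 := h2.mapL (lp.evalCLM ℂ (fun _ : Finset ℕ => ℂ) 2 σ)
  have h4 : ∀ i, X (lp.single 2 i (x i)) = x i • Z (symmDiff i {k}) := by
    intro i
    have : lp.single 2 i (x i) = x i • Z i := by
      rw [Z, ← lp.single_smul]; simp
    rw [this, map_smul, hX]
  have h5 : HasSum (fun i => if i = symmDiff σ {k} then x i else 0) ((X x : H) σ) := by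
    have h3' : HasSum (fun i => (lp.evalCLM ℂ (fun _ : Finset ℕ => ℂ) 2 σ)
        (X (lp.single 2 i (x i)))) ((X x : H) σ) := h3
    refine Eq.mp (congrArg (fun f => HasSum f ((X x : H) σ)) (funext fun i => ?_)) h3'
    symm
    rw [h4]
    by_cases h : i = symmDiff σ {k}
    · subst h
      simp [Z, lp.evalCLM]
    · have h' : symmDiff i {k} ≠ σ := by
        rintro rfl
        exact h (by simp)
      simp [Z, lp.evalCLM, h, Pi.single_apply, h'.symm]
  have h6 := hasSum_ite_eq (symmDiff σ {k}) (x (symmDiff σ {k}))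
  refine h5.unique ?_
  convert h6 using 2 with i
  split_ifs with h
  · rw [h]
  · rfl

/-- the flip permutation -/
def flipE (k : ℕ) : Finset ℕ ≃ Finset ℕ :=
  Function.Involutive.toPerm (fun σ => symmDiff σ {k}) (fun σ => by simp)

theorem flipE_apply (k : ℕ) (σ : Finset ℕ) : flipE k σ = symmDiff σ {k} := rfl

theorem Xi_norm (k : ℕ) (X : H →L[ℂ] H) (hX : ∀ σ, X (Z σ) = Z (symmDiff σ {k})) (x : H) :
    ‖X x‖ = ‖x‖ := by
  rw [lp.norm_eq_tsum_rpow (by norm_num), lp.norm_eq_tsum_rpow (by norm_num)]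
  congr 1
  rw [← (flipE k).tsum_eq]
  simp only [Xi_apply k X hX]
  simp [flipE_apply]

theorem Xi_sa (k : ℕ) (X : H →L[ℂ] H) (hX : ∀ σ, X (Z σ) = Z (symmDiff σ {k})) :
    IsSelfAdjoint X := by
  rw [ContinuousLinearMap.isSelfAdjoint_iff_isSymmetric]
  intro x y
  change inner ℂ (X x) y = inner ℂ x (X y)
  rw [lp.inner_eq_tsum, lp.inner_eq_tsum, ← (flipE k).tsum_eq]
  simp only [Xi_apply k X hX]
  simp [flipE_apply]

theorem Xi_opNorm (k : ℕ) (X : H →L[ℂ] H) (hX : ∀ σ, X (Z σ) = Z (symmDiff σ {k})) :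
    ‖X‖ ≤ 1 :=
  X.opNorm_le_bound zero_le_one (fun x => by rw [Xi_norm k X hX, one_mul])

/-- sign -/
def sg (s : Finset ℕ) (k : ℕ) : ℂ := if k ∈ s then 1 else -1

theorem sg_sq (s : Finset ℕ) (k : ℕ) : sg s k * sg s k = 1 := by
  unfold sg; split_ifs <;> simp

/-- character -/
def ch (s τ : Finset ℕ) : ℂ := ∏ k ∈ τ, sg s k

theorem ch_flip (s τ : Finset ℕ) (k : ℕ) : ch s (symmDiff τ {k}) = sg s k * ch s τ := by
  by_cases h : k ∈ τ
  · have : symmDiff τ {k} = τ.erase k := by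
      ext a; simp [Finset.mem_symmDiff]; grind
    rw [this, ch, ch, ← Finset.mul_prod_erase τ _ h, ← mul_assoc, sg_sq, one_mul]
  · have : symmDiff τ {k} = insert k τ := by
      ext a; simp [Finset.mem_symmDiff]; grind
    rw [this, ch, ch, Finset.prod_insert h]

/-- joint eigenvector -/
def ev (s : Finset ℕ) (N : ℕ) : H := ∑ τ ∈ (Finset.range N).powerset, ch s τ • Z τ

theorem ev_ne (s : Finset ℕ) (N : ℕ) : ev s N ≠ 0 := by
  intro h
  have h1 : (lp.evalCLM ℂ (fun _ : Finset ℕ => ℂ) 2 ∅) (ev s N) = 0 := by rw [h, map_zero]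
  rw [ev, map_sum, Finset.sum_eq_single ∅] at h1
  · simp [Z, lp.evalCLM, ch] at h1
  · intro b _ hb
    simp [Z, lp.evalCLM, hb.symm]
  · simp

theorem ev_eig (s : Finset ℕ) (N k : ℕ) (hk : k < N) (X : H →L[ℂ] H)
    (hX : ∀ σ, X (Z σ) = Z (symmDiff σ {k})) : X (ev s N) = sg s k • ev s N := by
  have hmem : ∀ τ ∈ (Finset.range N).powerset, symmDiff τ {k} ∈ (Finset.range N).powerset := by
    intro τ hτ
    rw [Finset.mem_powerset] at *
    intro a ha
    rw [Finset.mem_symmDiff] at ha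
    rcases ha with ha | ha
    · exact hτ ha.1
    · have := ha.1
      simp at this
      simpa [this] using hk
  rw [ev, map_sum, Finset.smul_sum]
  refine Finset.sum_nbij' (fun τ => symmDiff τ {k}) (fun τ => symmDiff τ {k}) hmem hmem
    (fun τ _ => by simp) (fun τ _ => by simp) ?_
  intro τ _
  rw [map_smul, hX, ch_flip, smul_smul, ← mul_assoc, sg_sq, one_mul]

theorem closure_eq (w : ℕ → ℝ) (hw_sum : Summable w) :
    closure {x : ℝ | ∃ σ : Finset ℕ, x = ∑ k ∈ σ, w k} =
      closure {x : ℝ | ∃ s : Set ℕ, x = ∑' k : s, w k} := by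
  apply Set.Subset.antisymm
  · apply closure_mono
    rintro x ⟨σ, rfl⟩
    exact ⟨(σ : Set ℕ), (Finset.tsum_subtype' σ w).symm⟩
  · apply closure_minimal _ isClosed_closure
    rintro x ⟨s, rfl⟩
    have h1 : HasSum (s.indicator w) (∑' k : s, w k) := by
      rw [tsum_subtype]
      exact (hw_sum.indicator s).hasSum
    classical
    refine mem_closure_of_tendsto h1 (Filter.Eventually.of_forall fun F => ?_)
    refine ⟨F.filter (· ∈ s), ?_⟩
    rw [Finset.sum_filter]
    rfl

theorem sub_spec (w : ℕ → ℝ) (hw_pos : ∀ k, 0 < w k) (hw_sum : Summable w)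
    (Xi : ℕ → H →L[ℂ] H)
    (hXi : ∀ k σ, Xi k (Z σ) = Z (symmDiff σ {k}))
    (A : H →L[ℂ] H) (hA : A = ∑' k, (w k : ℂ) • Xi k)
    (B : H →L[ℂ] H)
    (hB : B = (2⁻¹ : ℂ) • (((∑' k, w k : ℝ) : ℂ) • (1 : H →L[ℂ] H) + A))
    (s : Finset ℕ) : ((∑ k ∈ s, w k : ℝ) : ℂ) ∈ spectrum ℂ B := by
  by_contra hns
  rw [spectrum.notMem_iff] at hns
  obtain ⟨u, hu⟩ := hns
  set C : ℝ := ‖(↑u⁻¹ : H →L[ℂ] H)‖ with hC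
  set m : ℂ := ((∑ k ∈ s, w k : ℝ) : ℂ) with hm
  have hsumX : Summable (fun k => (w k : ℂ) • Xi k) := by
    refine Summable.of_norm_bounded hw_sum (fun k => ?_)
    rw [norm_smul, Complex.norm_real, Real.norm_of_nonneg (hw_pos k).le]
    exact mul_le_of_le_one_right (hw_pos k).le (Xi_opNorm k _ (hXi k))
  have key : ∀ N, s ⊆ Finset.range N → 1 ≤ C * ∑' k, w (k + N) := by
    intro N hN
    set v := ev s N with hv
    have hv0 : 0 < ‖v‖ := norm_pos_iff.mpr (ev_ne s N)
    have hBv : HasSum (fun k => (w k : ℂ) • ((2⁻¹ : ℂ) • (v + Xi k v))) (B v) := by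
      have h1 := hsumX.hasSum
      rw [← hA] at h1
      have h2 := h1.mapL (ContinuousLinearMap.apply ℂ H v)
      have h3 : HasSum (fun k => (w k : ℂ) • v) (((∑' k, w k : ℝ) : ℂ) • v) :=
        (Complex.hasSum_ofReal.mpr hw_sum.hasSum).smul_const v
      have h4 := (h3.add h2).const_smul (2⁻¹ : ℂ)
      convert h4 using 1
      · ext1 k
        change _ = (2⁻¹ : ℂ) • ((w k : ℂ) • v + (w k : ℂ) • Xi k v)
        rw [← smul_add, smul_comm]
      · rw [hB]; rfl
    have hfin : ∑ k ∈ Finset.range N, (w k : ℂ) • ((2⁻¹ : ℂ) • (v + Xi k v)) = m • v := by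
      have : ∀ k ∈ Finset.range N, (w k : ℂ) • ((2⁻¹ : ℂ) • (v + Xi k v))
          = (if k ∈ s then (w k : ℂ) else 0) • v := by
        intro k hk
        rw [hv, ev_eig s N k (Finset.mem_range.mp hk) _ (hXi k), sg]
        split_ifs
        · rw [one_smul, ← two_smul ℂ, smul_smul (2⁻¹ : ℂ)]; norm_num
        · simp
      rw [Finset.sum_congr rfl this, ← Finset.sum_smul, hm, ← Finset.sum_filter]
      congr 1
      rw [Finset.filter_mem_eq_inter, Finset.inter_eq_right.mpr hN]
      push_cast; rfl
    have htail : HasSum (fun k => (w (k+N) : ℂ) • ((2⁻¹ : ℂ) • (v + Xi (k+N) v))) (B v - m • v) := by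
      rw [← hfin]
      exact (hasSum_nat_add_iff' N).mpr hBv
    have htw : Summable (fun k => w (k + N)) := (summable_nat_add_iff N).mpr hw_sum
    have hbound : ‖B v - m • v‖ ≤ (∑' k, w (k + N)) * ‖v‖ := by
      rw [← htail.tsum_eq]
      refine tsum_of_norm_bounded (htw.hasSum.mul_right ‖v‖) (fun k => ?_)
      rw [norm_smul, Complex.norm_real, Real.norm_of_nonneg (hw_pos _).le]
      refine mul_le_mul_of_nonneg_left ?_ (hw_pos _).le
      rw [norm_smul]
      have := norm_add_le v (Xi (k+N) v)
      rw [Xi_norm _ _ (hXi (k+N))] at this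
      norm_num
      linarith
    have hinv : v = (↑u⁻¹ : H →L[ℂ] H) (m • v - B v) := by
      have h1 : (u : H →L[ℂ] H) v = m • v - B v := by
        rw [hu]; simp [Algebra.algebraMap_eq_smul_one]
      rw [← h1, ← mul_apply_eq_comp, u.inv_mul]; rfl
    have h2 : ‖v‖ ≤ C * ((∑' k, w (k + N)) * ‖v‖) := by
      calc ‖v‖ = ‖(↑u⁻¹ : H →L[ℂ] H) (m • v - B v)‖ := by rw [← hinv]
        _ ≤ C * ‖m • v - B v‖ := ContinuousLinearMap.le_opNorm _ _
        _ ≤ _ := by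
          rw [norm_sub_rev]
          exact mul_le_mul_of_nonneg_left hbound (norm_nonneg _)
    rw [← mul_assoc] at h2
    exact (le_mul_iff_one_le_left hv0).mp h2
  have hlim : Filter.Tendsto (fun N => C * ∑' k, w (k + N)) Filter.atTop (nhds (C * 0)) :=
    (tendsto_sum_nat_add w).const_mul C
  rw [mul_zero] at hlim
  have hev : ∀ᶠ N in Filter.atTop, s ⊆ Finset.range N := by
    obtain ⟨M, hM⟩ := s.exists_nat_subset_range
    filter_upwards [Filter.eventually_ge_atTop M] with N hN
    exact hM.trans (Finset.range_mono hN)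
  have := ge_of_tendsto hlim (hev.mono key)
  linarith

theorem spec_sub (w : ℕ → ℝ) (hw_pos : ∀ k, 0 < w k) (hw_sum : Summable w)
    (Xi : ℕ → H →L[ℂ] H)
    (hXi : ∀ k σ, Xi k (Z σ) = Z (symmDiff σ {k}))
    (A : H →L[ℂ] H) (hA : A = ∑' k, (w k : ℂ) • Xi k)
    (B : H →L[ℂ] H)
    (hB : B = (2⁻¹ : ℂ) • (((∑' k, w k : ℝ) : ℂ) • (1 : H →L[ℂ] H) + A)) :
    spectrum ℂ B ⊆ Complex.ofReal '' Set.Icc 0 (∑' k, w k) := by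
  have hbd : ∀ k, ‖(w k : ℂ) • Xi k‖ ≤ w k := by
    intro k
    rw [norm_smul, Complex.norm_real, Real.norm_of_nonneg (hw_pos k).le]
    exact mul_le_of_le_one_right (hw_pos k).le (Xi_opNorm k _ (hXi k))
  have hAn : ‖A‖ ≤ ∑' k, w k := by
    rw [hA]
    exact tsum_of_norm_bounded hw_sum.hasSum hbd
  have hAs : IsSelfAdjoint A := by
    rw [IsSelfAdjoint, hA, tsum_star]
    congr 1
    ext1 k
    rw [star_smul, (Xi_sa k _ (hXi k)).star_eq]
    simp
  intro z hz
  set W := ∑' k, w k with hW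
  have hz' : 2 * z - W ∈ spectrum ℂ A := by
    rw [spectrum.mem_iff] at hz ⊢
    intro h
    apply hz
    have : algebraMap ℂ (H →L[ℂ] H) z - B
        = algebraMap ℂ (H →L[ℂ] H) 2⁻¹ * (algebraMap ℂ (H →L[ℂ] H) (2 * z - W) - A) := by
      rw [hB]
      simp only [Algebra.algebraMap_eq_smul_one, smul_mul_assoc, one_mul]
      module
    rw [this]
    exact ((isUnit_iff_ne_zero.mpr (by norm_num : (2⁻¹ : ℂ) ≠ 0)).map _).mul h
  have hre := hAs.mem_spectrum_eq_re hz'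
  have : Nontrivial H := ⟨⟨ev ∅ 0, 0, ev_ne _ _⟩⟩
  have hn := (spectrum.norm_le_norm_of_mem hz').trans hAn
  have habs := abs_le.mp ((Complex.abs_re_le_norm _).trans hn)
  have him := congrArg Complex.im hre
  simp at him habs
  refine ⟨z.re, ⟨by linarith, by linarith⟩, ?_⟩
  apply Complex.ext <;> simp [him]

/-- Corollary 3.3: if the weight `w` is ideal then, with `B_w = (|w| I + A_w)/2`,
`spec(B_w) = [0, |w|]` and it also equals the closure of `{μ_w(σ) : σ ∈ Γ}`. -/
theorem spectrum_B_of_ideal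
    (w : ℕ → ℝ) (hw_pos : ∀ k, 0 < w k) (hw_sum : Summable w)
    (hw_ideal :
      closure {x : ℝ | ∃ s : Set ℕ, x = ∑' k : s, w k} = Set.Icc 0 (∑' k, w k))
    (Xi : ℕ → H →L[ℂ] H)
    (hXi : ∀ k σ, Xi k (Z σ) = Z (symmDiff σ {k}))
    (A : H →L[ℂ] H) (hA : A = ∑' k, (w k : ℂ) • Xi k)
    (B : H →L[ℂ] H)
    (hB : B = (2⁻¹ : ℂ) • (((∑' k, w k : ℝ) : ℂ) • (1 : H →L[ℂ] H) + A)) :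
    spectrum ℂ B = Complex.ofReal '' Set.Icc 0 (∑' k, w k) ∧
    spectrum ℂ B =
      Complex.ofReal '' closure {x : ℝ | ∃ σ : Finset ℕ, x = ∑ k ∈ σ, w k} := by
  have hc := closure_eq w hw_sum
  have h1 : spectrum ℂ B = Complex.ofReal '' Set.Icc 0 (∑' k, w k) := by
    apply Set.Subset.antisymm (spec_sub w hw_pos hw_sum Xi hXi A hA B hB)
    rw [← hw_ideal, ← hc, Set.image_subset_iff]
    apply closure_minimal
    · rintro x ⟨s, rfl⟩
      exact sub_spec w hw_pos hw_sum Xi hXi A hA B hB s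
    · exact (spectrum.isClosed B).preimage Complex.continuous_ofReal
  refine ⟨h1, ?_⟩
  rw [hc, hw_ideal, h1]
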